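/- Let d ≥ 2, λ > 0, η ≥ 0. Then for all sufficiently large even L, (1/2)·Z^{+,per}_{L;λ,η} ≤ Z^{+,per}_{L;λ,η}[ φ_i ≤ V^{−1}((2d/λ) log L) for all i ∈ T_L^d ] ≤ Z^{+,per}_{L;λ,η}, where Z[A] denotes the restriction of the partition-function integral to configurations in A, and V^{−1}(y) = inf{x ≥ 0 : V(x) ≥ y}. -/

import Mathlib

open MeasureTheory Filter
open scoped Classical



/-- Nearest-neighbour adjacency on the torus `T_L^d = (ℤ/Lℤ)^d`. -/
def torusAdj (d L : ℕ) (i j : Fin d → ZMod L) : Prop :=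
  ∃ k : Fin d, j = Function.update i k (i k + 1) ∨ j = Function.update i k (i k - 1)

/-- The periodic Hamiltonian `H^{per}_{L;λ}(φ)`. -/
noncomputable def HamPer (d L : ℕ) [NeZero L] (lam : ℝ) (V : ℝ → ℝ)
    (ψ : (Fin d → ZMod L) → ℝ) : ℝ :=
  (1 / (8 * d)) * ∑ i, ∑ j, (if torusAdj d L i j then (ψ i - ψ j) ^ 2 else 0)
    + lam * ∑ i, V (ψ i)

/-- The a priori measure `∏_{i ∈ T_L^d} (dφ_i + η δ₀(dφ_i))` on the torus. -/
noncomputable def priorPer (d L : ℕ) [NeZero L] (η : ℝ) : Measure ((Fin d → ZMod L) → ℝ) :=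
  Measure.pi fun _ => (volume + ENNReal.ofReal η • Measure.dirac (0 : ℝ))

/-- Density `e^{-H^{per}_{L;λ}(φ)} 𝟙_{Ω₊}(φ)`. -/
noncomputable def densPer (d L : ℕ) [NeZero L] (lam : ℝ) (V : ℝ → ℝ)
    (φ : (Fin d → ZMod L) → ℝ) : ℝ :=
  if ∀ i, 0 ≤ φ i then Real.exp (-(HamPer d L lam V φ)) else 0

/-- The unnormalized Gibbs measure with hard wall, periodic boundary condition. -/
noncomputable def gibbsPer (d L : ℕ) [NeZero L] (lam η : ℝ) (V : ℝ → ℝ) :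
    Measure ((Fin d → ZMod L) → ℝ) :=
  (priorPer d L η).withDensity fun φ => ENNReal.ofReal (densPer d L lam V φ)

/-- The partition function `Z^{+,per}_{L;λ,η}`. -/
noncomputable def ZplusPer (d L : ℕ) [NeZero L] (lam η : ℝ) (V : ℝ → ℝ) : ℝ :=
  (gibbsPer d L lam η V Set.univ).toReal

/-- The restricted partition function `Z^{+,per}_{L;λ,η}[A]`. -/
noncomputable def ZplusPerIn (d L : ℕ) [NeZero L] (lam η : ℝ) (V : ℝ → ℝ)
    (A : Set ((Fin d → ZMod L) → ℝ)) : ℝ :=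
  (gibbsPer d L lam η V A).toReal

/-- The normalized Gibbs measure `μ^{+,per}_{L;λ,η}`. -/
noncomputable def muPer (d L : ℕ) [NeZero L] (lam η : ℝ) (V : ℝ → ℝ) :
    Measure ((Fin d → ZMod L) → ℝ) :=
  (gibbsPer d L lam η V Set.univ)⁻¹ • gibbsPer d L lam η V

/-- The periodic finite-volume free energy `f^{per}_L(λ,η)`. -/
noncomputable def freeEnergyPer (d L : ℕ) [NeZero L] (lam η : ℝ) (V : ℝ → ℝ) : ℝ :=
  ((L : ℝ) ^ d)⁻¹ * Real.log (ZplusPer d L lam η V / ZplusPer d L lam 0 V)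

/-- The generalized inverse `V⁻¹(y) = inf {x ≥ 0 : V(x) ≥ y}`. -/
noncomputable def Vinv (V : ℝ → ℝ) (y : ℝ) : ℝ :=
  sInf {x : ℝ | 0 ≤ x ∧ y ≤ V x}

/-!
For `L` even the Gibbs density is reflection positive: it is the product of a function of the
heights on one closed half of the torus and of the mirror image of that function. Cauchy-Schwarz
over the heights on the mirror then gives `μ(A) ^ 2 ≤ μ(A ∩ θA)` for every event `A` on one half.
Doubling a single site again and again bounds `μ(φ_i > M) ^ N` by the probability that the heights
exceed `M` on a whole box of `N = 2 ^ (d * K) ≥ (L / 4) ^ d` sites with spacing `2`.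

Dropping the gradient energy compares the latter with independent sites, while heights in `[0, 1]`
alone show `Z ≥ b ^ (-L ^ d)` with `b` independent of `L`. As `L ^ d ≤ 4 ^ d * N`, taking `N`-th
roots gives `μ(φ_i > M) ≤ C * T(M)`, where `T` is the single-site tail and `C` does not depend on
`L`. For `M = V⁻¹((κ / λ) log L)` with `κ > d` an exponential Chebyshev bound makes `T(M)` of order
`o(L ^ (-d))`, and a union bound over the sites finishes the proof.
-/

open Function
open scoped ENNReal

section Lintegral

lemma sq_lintegral_mul_le {α : Type*} [MeasurableSpace α] (μ : Measure α) {f g : α → ℝ≥0∞}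
    (hf : AEMeasurable f μ) (hg : AEMeasurable g μ) :
    (∫⁻ x, f x * g x ∂μ) ^ 2 ≤ (∫⁻ x, f x * f x ∂μ) * ∫⁻ x, g x * g x ∂μ := by
  have sq_sqrt (a : ℝ≥0∞) : (a ^ (1 / (2 : ℝ))) ^ 2 = a := by
    rw [← ENNReal.rpow_natCast, ← ENNReal.rpow_mul]; norm_num
  have holder := ENNReal.lintegral_mul_le_Lp_mul_Lq μ Real.HolderConjugate.two_two hf hg
  calc (∫⁻ x, f x * g x ∂μ) ^ 2
      ≤ ((∫⁻ x, f x ^ (2 : ℝ) ∂μ) ^ (1 / (2 : ℝ)) *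
          (∫⁻ x, g x ^ (2 : ℝ) ∂μ) ^ (1 / (2 : ℝ))) ^ 2 := by gcongr; exact holder
    _ = (∫⁻ x, f x * f x ∂μ) * ∫⁻ x, g x * g x ∂μ := by
        rw [mul_pow, sq_sqrt, sq_sqrt]; simp only [ENNReal.rpow_two, pow_two]

variable {ι : Type*} {X : ι → Type*} [∀ i, MeasurableSpace (X i)] {μ : ∀ i, Measure (X i)}

lemma dependsOn_lmarginal [DecidableEq ι] {f : (∀ i, X i) → ℝ≥0∞} {s : Set ι}
    (hf : DependsOn f s) (t : Finset ι) : DependsOn (∫⋯∫⁻_t, f ∂μ) (s \ t) :=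
  fun _ _ h => lintegral_congr fun y => hf.updateFinset y h

lemma lmarginal_mul_of_dependsOn_compl [DecidableEq ι] {f g : (∀ i, X i) → ℝ≥0∞} {s : Finset ι}
    (hf : Measurable f) (hg : DependsOn g (↑s)ᶜ) :
    ∫⋯∫⁻_s, (f * g) ∂μ = (∫⋯∫⁻_s, f ∂μ) * g := by
  ext x
  have g_update (y : ∀ i : s, X i) : g (updateFinset x s y) = g x :=
    hg fun i hi => by simp [updateFinset, show i ∉ s from hi]
  simp only [lmarginal, Pi.mul_apply, g_update]
  exact lintegral_mul_const _ (hf.comp measurable_updateFinset)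

variable [Fintype ι] [∀ i, SigmaFinite (μ i)] {f : ∀ i, X i → ℝ≥0∞}

lemma lintegral_pi_prod_eq_prod (hf : ∀ i, Measurable (f i)) :
    ∫⁻ x, ∏ i, f i (x i) ∂Measure.pi μ = ∏ i, ∫⁻ y, f i y ∂μ i := by
  have marginal (s : Finset ι) :
      ∫⋯∫⁻_s, (fun x => ∏ i ∈ s, f i (x i)) ∂μ = fun _ => ∏ i ∈ s, ∫⁻ y, f i y ∂μ i := by
    induction s using Finset.induction_on with
    | empty => simp
    | insert i s hi ih =>
      have hprod (t : Finset ι) : Measurable fun x : ∀ i, X i => ∏ i ∈ t, f i (x i) :=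
        Finset.measurable_prod _ fun i _ => (hf i).comp (measurable_pi_apply i)
      have hcoord : DependsOn (fun x : ∀ i, X i => f i (x i)) (↑s)ᶜ :=
        fun x y h => congrArg (f i) (h i hi)
      have split : (fun x : ∀ i, X i => ∏ j ∈ insert i s, f j (x j)) =
          (fun x => ∏ j ∈ s, f j (x j)) * fun x => f i (x i) := by
        ext x; rw [Finset.prod_insert hi, mul_comm, Pi.mul_apply]
      rw [Finset.insert_eq, lmarginal_union μ _ (hprod _)
        (Finset.disjoint_singleton_left.mpr hi), ← Finset.insert_eq, split,
        lmarginal_mul_of_dependsOn_compl (hprod s) hcoord, ih, lmarginal_singleton]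
      ext x
      simp only [Pi.mul_apply, update_self, Finset.prod_insert hi]
      rw [lintegral_const_mul _ (hf i), mul_comm]
  have total := marginal Finset.univ
  rw [lmarginal_univ] at total
  rcases isEmpty_or_nonempty (∀ i, X i) with h | ⟨⟨x⟩⟩
  · obtain ⟨i, hi⟩ := isEmpty_pi.1 h
    rw [lintegral_of_isEmpty, Finset.prod_eq_zero (Finset.mem_univ i) (lintegral_of_isEmpty _ _)]
  · exact congrFun total x

lemma pi_withDensity (hf : ∀ i, Measurable (f i)) [∀ i, SigmaFinite ((μ i).withDensity (f i))] :
    Measure.pi (fun i => (μ i).withDensity (f i)) =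
      (Measure.pi μ).withDensity fun x => ∏ i, f i (x i) := by
  refine Measure.pi_eq fun s hs => ?_
  have indicator_prod (x : ∀ i, X i) :
      (Set.univ.pi s).indicator (fun x => ∏ i, f i (x i)) x = ∏ i, (s i).indicator (f i) (x i) := by
    by_cases hx : x ∈ Set.univ.pi s
    · rw [Set.indicator_of_mem hx]
      exact Finset.prod_congr rfl fun i _ => (Set.indicator_of_mem (hx i (Set.mem_univ i)) _).symm
    · obtain ⟨i, hi⟩ : ∃ i, x i ∉ s i := by simpa [Set.mem_univ_pi] using hx
      rw [Set.indicator_of_notMem hx,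
        Finset.prod_eq_zero (Finset.mem_univ i) (Set.indicator_of_notMem hi _)]
  rw [withDensity_apply _ (MeasurableSet.univ_pi hs), ← lintegral_indicator (.univ_pi hs)]
  simp only [indicator_prod]
  rw [lintegral_pi_prod_eq_prod fun i => (hf i).indicator (hs i)]
  exact Finset.prod_congr rfl fun i _ => by
    rw [withDensity_apply _ (hs i), lintegral_indicator (hs i)]

end Lintegral

section Reflection

variable {ι : Type*} {θ : ι → ι} {P : Set ι}

/-- `θ` is a reflection of the index set `ι` and `P` is one of the two closed halves it exchanges:
`P ∩ θ '' P` is the mirror, which `θ` fixes pointwise. -/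
structure IsReflection (θ : ι → ι) (P : Set ι) : Prop where
  involutive : Involutive θ
  mem_or_apply_mem : ∀ i, i ∈ P ∨ θ i ∈ P
  apply_eq_self : ∀ i, i ∈ P → θ i ∈ P → θ i = i

variable {E : Type*} [MeasurableSpace E] {ν : Measure E} [SigmaFinite ν] {f g : (ι → E) → ℝ≥0∞}

lemma lmarginal_image_mul_comp (hθ : Involutive θ) {s : Finset ι} (hg : Measurable g)
    (hf : DependsOn f (↑(s.image θ))ᶜ) :
    ∫⋯∫⁻_s.image θ, (f * fun φ => g (φ ∘ θ)) ∂(fun _ => ν) =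
      f * fun φ => (∫⋯∫⁻_s, g ∂fun _ => ν) (φ ∘ θ) := by
  have hgθ : Measurable fun φ : ι → E => g (φ ∘ θ) :=
    hg.comp (measurable_pi_lambda _ fun i => measurable_pi_apply (θ i))
  rw [mul_comm f, mul_comm f, lmarginal_mul_of_dependsOn_compl hgθ hf]
  congr 1
  ext φ
  exact lmarginal_image (μ := fun _ => ν) hθ.injective s hg φ

namespace IsReflection

variable [Fintype ι]

-- Integrating out the two open halves leaves a product of functions on the mirror.
lemma lintegral_mul_comp_eq (h : IsReflection θ P) (hf : Measurable f) (hg : Measurable g)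
    (hfP : DependsOn f P) (hgP : DependsOn g P) (φ : ι → E) :
    ∫⁻ φ, f φ * g (φ ∘ θ) ∂Measure.pi (fun _ => ν) =
      (∫⋯∫⁻_{i | i ∈ P ∧ θ i ∈ P}, ((∫⋯∫⁻_{i | θ i ∉ P}, f ∂fun _ => ν) *
        ∫⋯∫⁻_{i | θ i ∉ P}, g ∂fun _ => ν) ∂fun _ => ν) φ := by
  set mirror : Finset ι := {i | i ∈ P ∧ θ i ∈ P}
  set inner : Finset ι := {i | θ i ∉ P}
  have mem_mirror {i : ι} : i ∈ mirror ↔ i ∈ P ∧ θ i ∈ P := by simp [mirror]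
  have mem_inner {i : ι} : i ∈ inner ↔ θ i ∉ P := by simp [inner]
  have mem_outer {i : ι} : i ∈ inner.image θ ↔ i ∉ P := by
    rw [Finset.mem_image]
    exact ⟨by rintro ⟨j, hj, rfl⟩; exact mem_inner.1 hj,
      fun hi => ⟨θ i, by rwa [mem_inner, h.involutive i], h.involutive i⟩⟩
  have hdisj : Disjoint inner (inner.image θ) := Finset.disjoint_left.2 fun i hi ho =>
    (h.mem_or_apply_mem i).elim (mem_outer.1 ho) (mem_inner.1 hi)
  have hdisj' : Disjoint mirror (inner ∪ inner.image θ) := Finset.disjoint_left.2 fun i hm hio => by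
    rw [Finset.mem_union, mem_inner, mem_outer] at hio
    rw [mem_mirror] at hm
    tauto
  have huniv : (Finset.univ : Finset ι) = mirror ∪ (inner ∪ inner.image θ) := by
    ext i; simp only [Finset.mem_univ, Finset.mem_union, mem_mirror, mem_inner, mem_outer]; tauto
  have hgQ : DependsOn (∫⋯∫⁻_inner, g ∂fun _ => ν) (P \ inner) := dependsOn_lmarginal hgP inner
  have comp_eq : (fun φ => (∫⋯∫⁻_inner, g ∂fun _ => ν) (φ ∘ θ)) = ∫⋯∫⁻_inner, g ∂fun _ => ν := by
    ext φ
    refine hgQ fun i hi => congrArg φ (h.apply_eq_self i hi.1 ?_)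
    exact not_not.1 fun hi' => hi.2 (mem_inner.2 hi')
  have hprod : Measurable (f * fun φ => g (φ ∘ θ)) :=
    hf.mul (hg.comp (measurable_pi_lambda _ fun i => measurable_pi_apply (θ i)))
  change ∫⁻ φ, (f * fun φ => g (φ ∘ θ)) φ ∂Measure.pi (fun _ => ν) = _
  rw [lintegral_eq_lmarginal_univ φ, huniv, lmarginal_union _ _ hprod hdisj',
    lmarginal_union _ _ hprod hdisj,
    lmarginal_image_mul_comp h.involutive hg (hfP.mono fun i hi ho => mem_outer.1 ho hi), comp_eq,
    lmarginal_mul_of_dependsOn_compl hf (hgQ.mono fun i hi => hi.2)]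

lemma sq_lintegral_mul_comp_le (h : IsReflection θ P) (hf : Measurable f) (hg : Measurable g)
    (hfP : DependsOn f P) (hgP : DependsOn g P) :
    (∫⁻ φ, f φ * g (φ ∘ θ) ∂Measure.pi (fun _ => ν)) ^ 2 ≤
      (∫⁻ φ, f φ * f (φ ∘ θ) ∂Measure.pi (fun _ => ν)) *
        ∫⁻ φ, g φ * g (φ ∘ θ) ∂Measure.pi (fun _ => ν) := by
  rcases isEmpty_or_nonempty (ι → E) with _ | ⟨⟨φ⟩⟩
  · simp only [lintegral_of_isEmpty]; simp
  rw [h.lintegral_mul_comp_eq hf hg hfP hgP φ, h.lintegral_mul_comp_eq hf hf hfP hfP φ,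
    h.lintegral_mul_comp_eq hg hg hgP hgP φ]
  exact sq_lintegral_mul_le _ ((hf.lmarginal _).comp measurable_updateFinset).aemeasurable
    ((hg.lmarginal _).comp measurable_updateFinset).aemeasurable

end IsReflection

end Reflection

section Gibbs

variable {d L : ℕ} {lam η : ℝ} {V : ℝ → ℝ}

/-- The a priori measure of a single height: Lebesgue measure plus a pinning mass `η` at `0`. -/
noncomputable def sitePrior (η : ℝ) : Measure ℝ :=
  volume + ENNReal.ofReal η • Measure.dirac 0

instance : SigmaFinite (sitePrior η) := by
  have : IsFiniteMeasure (ENNReal.ofReal η • Measure.dirac (0 : ℝ)) :=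
    Measure.smul_finite _ ENNReal.ofReal_ne_top
  unfold sitePrior
  infer_instance

lemma torusAdj_symm {i j : Fin d → ZMod L} (h : torusAdj d L i j) : torusAdj d L j i := by
  obtain ⟨k, rfl | rfl⟩ := h
  · exact ⟨k, .inr (by simp)⟩
  · exact ⟨k, .inl (by simp)⟩

lemma densPer_nonneg [NeZero L] (φ : (Fin d → ZMod L) → ℝ) : 0 ≤ densPer d L lam V φ := by
  unfold densPer; positivity

lemma measurable_densPer [NeZero L] (hV : Measurable V) : Measurable (densPer d L lam V) := by
  have hcoord (i : Fin d → ZMod L) : Measurable fun φ : (Fin d → ZMod L) → ℝ => φ i :=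
    measurable_pi_apply i
  have hHam : Measurable (HamPer d L lam V) := by
    unfold HamPer
    refine .add (.const_mul (Finset.measurable_sum _ fun i _ => Finset.measurable_sum _
      fun j _ => ?_) _) (.const_mul (Finset.measurable_sum _ fun i _ => hV.comp (hcoord i)) _)
    split_ifs
    · exact ((hcoord i).sub (hcoord j)).pow_const 2
    · exact measurable_const
  refine Measurable.ite ?_ hHam.neg.exp measurable_const
  simp only [Set.ofPred_forall]
  exact .iInter fun i => measurableSet_le measurable_const (hcoord i)

/-- A reflection of the torus preserving adjacency, for which no edge joins two sites strictly on
opposite sides of the mirror. -/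
structure IsTorusReflection (θ : (Fin d → ZMod L) → Fin d → ZMod L) (P : Set (Fin d → ZMod L)) :
    Prop extends IsReflection θ P where
  torusAdj_apply : ∀ i j, torusAdj d L i j → torusAdj d L (θ i) (θ j)
  apply_mem_of_torusAdj : ∀ i j, torusAdj d L i j → i ∉ P → θ j ∈ P

/-- Folds the index set onto the half `P` along the reflection `θ`. -/
noncomputable def fold {ι : Type*} (θ : ι → ι) (P : Set ι) (i : ι) : ι :=
  if i ∈ P then i else θ i

namespace IsTorusReflection

variable {θ : (Fin d → ZMod L) → Fin d → ZMod L} {P : Set (Fin d → ZMod L)}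

lemma fold_mem (h : IsTorusReflection θ P) (i : Fin d → ZMod L) : fold θ P i ∈ P := by
  unfold fold
  split_ifs with hi
  exacts [hi, (h.mem_or_apply_mem i).resolve_left hi]

lemma dependsOn_comp_fold (h : IsTorusReflection θ P) {α : Type*}
    (F : ((Fin d → ZMod L) → ℝ) → α) : DependsOn (fun φ => F (φ ∘ fold θ P)) P :=
  fun _ _ hφ => congrArg F <| funext fun i => hφ _ (h.fold_mem i)

lemma fold_eq_of_torusAdj (h : IsTorusReflection θ P) {i j : Fin d → ZMod L}
    (hij : torusAdj d L i j) :
    (fold θ P i = i ∧ fold θ P j = j) ∨ (fold θ P i = θ i ∧ fold θ P j = θ j) := by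
  by_cases hi : i ∈ P <;> by_cases hj : j ∈ P
  · simp [fold, hi, hj]
  · have := h.apply_eq_self i hi (h.apply_mem_of_torusAdj j i (torusAdj_symm hij) hj)
    simp [fold, hi, hj, this]
  · have := h.apply_eq_self j hj (h.apply_mem_of_torusAdj i j hij hi)
    simp [fold, hi, hj, this]
  · simp [fold, hi, hj]

lemma torusAdj_apply_iff (h : IsTorusReflection θ P) {i j : Fin d → ZMod L} :
    torusAdj d L (θ i) (θ j) ↔ torusAdj d L i j :=
  ⟨fun hij => by simpa only [h.involutive _] using h.torusAdj_apply _ _ hij, h.torusAdj_apply i j⟩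

variable [NeZero L]

lemma HamPer_comp (h : IsTorusReflection θ P) (φ : (Fin d → ZMod L) → ℝ) :
    HamPer d L lam V (φ ∘ θ) = HamPer d L lam V φ := by
  let σ := h.involutive.toPerm
  unfold HamPer
  congr 2
  · symm
    rw [← Equiv.sum_comp σ]
    refine Finset.sum_congr rfl fun i _ => ?_
    rw [← Equiv.sum_comp σ]
    exact Finset.sum_congr rfl fun j _ => if_congr h.torusAdj_apply_iff rfl rfl
  · exact Equiv.sum_comp σ fun i => V (φ i)

-- An edge and its mirror image are folded onto the same edge, once by `φ` and once by `φ ∘ θ`.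
lemma HamPer_comp_fold_add (h : IsTorusReflection θ P) (φ : (Fin d → ZMod L) → ℝ) :
    HamPer d L lam V (φ ∘ fold θ P) + HamPer d L lam V ((φ ∘ θ) ∘ fold θ P) =
      2 * HamPer d L lam V φ := by
  have hθ (i : Fin d → ZMod L) : θ (θ i) = i := h.involutive i
  have grad : (∑ i, ∑ j, if torusAdj d L i j then
        ((φ ∘ fold θ P) i - (φ ∘ fold θ P) j) ^ 2 else 0) +
      (∑ i, ∑ j, if torusAdj d L i j then
        (((φ ∘ θ) ∘ fold θ P) i - ((φ ∘ θ) ∘ fold θ P) j) ^ 2 else 0) =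
      (∑ i, ∑ j, if torusAdj d L i j then (φ i - φ j) ^ 2 else 0) +
      ∑ i, ∑ j, if torusAdj d L i j then ((φ ∘ θ) i - (φ ∘ θ) j) ^ 2 else 0 := by
    simp only [← Finset.sum_add_distrib]
    refine Finset.sum_congr rfl fun i _ => Finset.sum_congr rfl fun j _ => ?_
    split_ifs with hij
    · rcases h.fold_eq_of_torusAdj hij with ⟨hi, hj⟩ | ⟨hi, hj⟩ <;>
        simp only [comp_apply, hi, hj, hθ]
      exact add_comm _ _
    · rfl
  have pot : (∑ i, V ((φ ∘ fold θ P) i)) + ∑ i, V (((φ ∘ θ) ∘ fold θ P) i) =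
      (∑ i, V (φ i)) + ∑ i, V ((φ ∘ θ) i) := by
    simp only [← Finset.sum_add_distrib]
    refine Finset.sum_congr rfl fun i _ => ?_
    by_cases hi : i ∈ P <;> simp [fold, hi, hθ, add_comm]
  have sum_eq : HamPer d L lam V (φ ∘ fold θ P) + HamPer d L lam V ((φ ∘ θ) ∘ fold θ P) =
      HamPer d L lam V φ + HamPer d L lam V (φ ∘ θ) := by
    unfold HamPer
    linear_combination (1 / (8 * d) : ℝ) * grad + lam * pot
  rw [sum_eq, h.HamPer_comp, two_mul]

lemma densPer_comp_fold_mul (h : IsTorusReflection θ P) (φ : (Fin d → ZMod L) → ℝ) :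
    densPer d L lam V (φ ∘ fold θ P) * densPer d L lam V ((φ ∘ θ) ∘ fold θ P) =
      densPer d L lam V φ ^ 2 := by
  have nonneg_iff : (∀ i, 0 ≤ φ i) ↔
      (∀ i, 0 ≤ (φ ∘ fold θ P) i) ∧ ∀ i, 0 ≤ ((φ ∘ θ) ∘ fold θ P) i := by
    refine ⟨fun hφ => ⟨fun i => hφ _, fun i => hφ _⟩, fun hφ i => ?_⟩
    by_cases hi : i ∈ P
    · simpa [fold, hi] using hφ.1 i
    · simpa [fold, hi, h.involutive i] using hφ.2 i
  by_cases hφ : ∀ i, 0 ≤ φ i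
  · obtain ⟨h₁, h₂⟩ := nonneg_iff.1 hφ
    rw [densPer, densPer, densPer, if_pos hφ, if_pos h₁, if_pos h₂, ← Real.exp_add,
      ← Real.exp_nat_mul]
    congr 1
    push_cast
    linear_combination -h.HamPer_comp_fold_add (lam := lam) (V := V) φ
  · rw [densPer, densPer, densPer, if_neg hφ]
    rcases not_and_or.1 (mt nonneg_iff.2 hφ) with h' | h' <;> rw [if_neg h'] <;> ring

/-- The square root of the Gibbs density, folded onto the half `P` and restricted to `A`: the factor
of the density carried by one half of the torus. -/
noncomputable def halfDensity (θ : (Fin d → ZMod L) → Fin d → ZMod L) (P : Set (Fin d → ZMod L))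
    (lam : ℝ) (V : ℝ → ℝ) (A : Set ((Fin d → ZMod L) → ℝ)) : ((Fin d → ZMod L) → ℝ) → ℝ≥0∞ :=
  A.indicator fun φ => ENNReal.ofReal √(densPer d L lam V (φ ∘ fold θ P))

lemma measurable_halfDensity (hV : Measurable V) {A : Set ((Fin d → ZMod L) → ℝ)}
    (hA : MeasurableSet A) : Measurable (halfDensity θ P lam V A) :=
  ((measurable_densPer hV).comp (measurable_pi_lambda _ fun i =>
    measurable_pi_apply (fold θ P i))).sqrt.ennreal_ofReal.indicator hA

lemma dependsOn_halfDensity (h : IsTorusReflection θ P) {A : Set ((Fin d → ZMod L) → ℝ)}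
    (hA : DependsOn (· ∈ A) P) : DependsOn (halfDensity θ P lam V A) P := by
  intro φ ψ hφψ
  unfold halfDensity
  simp only [Set.indicator_apply]
  refine if_congr (iff_of_eq (hA hφψ)) ?_ rfl
  exact h.dependsOn_comp_fold (fun φ => ENNReal.ofReal √(densPer d L lam V φ)) hφψ

lemma gibbsPer_inter_preimage (h : IsTorusReflection θ P) {A B : Set ((Fin d → ZMod L) → ℝ)}
    (hA : MeasurableSet A) (hB : MeasurableSet B) :
    gibbsPer d L lam η V (A ∩ (· ∘ θ) ⁻¹' B) =
      ∫⁻ φ, halfDensity θ P lam V A φ * halfDensity θ P lam V B (φ ∘ θ)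
        ∂Measure.pi fun _ => sitePrior η := by
  have hAB : MeasurableSet (A ∩ (· ∘ θ) ⁻¹' B) :=
    hA.inter (measurable_pi_lambda _ (fun i => measurable_pi_apply (θ i)) hB)
  rw [gibbsPer, withDensity_apply _ hAB, ← lintegral_indicator hAB]
  refine lintegral_congr fun φ => ?_
  have sqrt_mul : √(densPer d L lam V (φ ∘ fold θ P)) *
      √(densPer d L lam V ((φ ∘ θ) ∘ fold θ P)) = densPer d L lam V φ := by
    rw [← Real.sqrt_mul (densPer_nonneg _), h.densPer_comp_fold_mul,
      Real.sqrt_sq (densPer_nonneg φ)]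
  simp only [halfDensity, Set.indicator_apply, Set.mem_inter_iff, Set.mem_preimage]
  by_cases hφA : φ ∈ A <;> by_cases hφB : φ ∘ θ ∈ B <;> simp only [hφA, hφB, if_true, if_false,
    and_self, and_false, false_and, mul_zero, zero_mul]
  rw [← ENNReal.ofReal_mul (Real.sqrt_nonneg _), sqrt_mul]

lemma sq_gibbsPer_inter_preimage_le (h : IsTorusReflection θ P) (hV : Measurable V)
    {A B : Set ((Fin d → ZMod L) → ℝ)} (hA : MeasurableSet A) (hB : MeasurableSet B)
    (hAP : DependsOn (· ∈ A) P) (hBP : DependsOn (· ∈ B) P) :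
    gibbsPer d L lam η V (A ∩ (· ∘ θ) ⁻¹' B) ^ 2 ≤
      gibbsPer d L lam η V (A ∩ (· ∘ θ) ⁻¹' A) * gibbsPer d L lam η V (B ∩ (· ∘ θ) ⁻¹' B) := by
  simp only [h.gibbsPer_inter_preimage, hA, hB]
  exact h.sq_lintegral_mul_comp_le (measurable_halfDensity hV hA) (measurable_halfDensity hV hB)
    (h.dependsOn_halfDensity hAP) (h.dependsOn_halfDensity hBP)

lemma sq_muPer_le (h : IsTorusReflection θ P) (hV : Measurable V)
    {A : Set ((Fin d → ZMod L) → ℝ)} (hA : MeasurableSet A) (hAP : DependsOn (· ∈ A) P) :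
    muPer d L lam η V A ^ 2 ≤ muPer d L lam η V (A ∩ (· ∘ θ) ⁻¹' A) := by
  have gibbs_sq := h.sq_gibbsPer_inter_preimage_le (lam := lam) (η := η) hV hA .univ hAP
    fun _ _ _ => rfl
  rw [Set.preimage_univ, Set.inter_univ, Set.univ_inter] at gibbs_sq
  simp only [muPer, Measure.smul_apply, smul_eq_mul]
  set Z := gibbsPer d L lam η V Set.univ
  calc (Z⁻¹ * gibbsPer d L lam η V A) ^ 2
      = Z⁻¹ * (Z⁻¹ * gibbsPer d L lam η V A ^ 2) := by ring
    _ ≤ Z⁻¹ * (Z⁻¹ * (gibbsPer d L lam η V (A ∩ (· ∘ θ) ⁻¹' A) * Z)) := by gcongr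
    _ = Z⁻¹ * gibbsPer d L lam η V (A ∩ (· ∘ θ) ⁻¹' A) * (Z * Z⁻¹) := by ring
    _ ≤ Z⁻¹ * gibbsPer d L lam η V (A ∩ (· ∘ θ) ⁻¹' A) :=
        mul_le_of_le_one_right' (ENNReal.mul_inv_le_one Z)

end IsTorusReflection

end Gibbs

section Chessboard

variable {d L : ℕ} {lam η M : ℝ} {V : ℝ → ℝ}

lemma dependsOn_forall_lt {ι : Type*} {A P : Set ι} (hAP : A ⊆ P) :
    DependsOn (· ∈ {φ : ι → ℝ | ∀ x ∈ A, M < φ x}) P :=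
  fun _ _ hφ => propext <| forall₂_congr fun x hx => by rw [hφ x (hAP hx)]

lemma measurableSet_forall_lt {ι : Type*} [Countable ι] (A : Set ι) (M : ℝ) :
    MeasurableSet {φ : ι → ℝ | ∀ x ∈ A, M < φ x} := by
  simp only [Set.ofPred_forall]
  exact .iInter fun x => .iInter fun _ => measurableSet_lt measurable_const (measurable_pi_apply x)

lemma IsTorusReflection.sq_muPer_forall_lt_le [NeZero L]
    {θ : (Fin d → ZMod L) → Fin d → ZMod L} {P A B : Set (Fin d → ZMod L)}
    (h : IsTorusReflection θ P) (hV : Measurable V) (hAP : A ⊆ P)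
    (hB : ∀ x ∈ B, x ∈ A ∨ θ x ∈ A) :
    muPer d L lam η V {φ | ∀ x ∈ A, M < φ x} ^ 2 ≤ muPer d L lam η V {φ | ∀ x ∈ B, M < φ x} := by
  refine (h.sq_muPer_le hV (measurableSet_forall_lt A M) (dependsOn_forall_lt hAP)).trans
    (measure_mono fun φ hφ x hx => ?_)
  rcases hB x hx with hxA | hxA
  · exact hφ.1 x hxA
  · simpa only [comp_apply, h.involutive x] using hφ.2 (θ x) hxA

/-- Reflection of the torus in the hyperplane `{x | x k = a}`. -/
def torusReflection (k : Fin d) (a : ZMod L) (x : Fin d → ZMod L) : Fin d → ZMod L :=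
  update x k (2 * a - x k)

/-- The closed half of the torus cut out by the hyperplanes `{x | x k = a}` and
`{x | x k = a - L / 2}`. -/
def closedHalf (k : Fin d) (a : ZMod L) : Set (Fin d → ZMod L) :=
  {x | 2 * (a - x k).val ≤ L}

lemma sub_torusReflection_apply (k : Fin d) (a : ZMod L) (x : Fin d → ZMod L) :
    a - torusReflection k a x k = -(a - x k) := by
  simp only [torusReflection, update_self]; ring

lemma torusReflection_involutive (k : Fin d) (a : ZMod L) : Involutive (torusReflection k a) := by
  intro x
  simp [torusReflection]

lemma torusAdj_torusReflection (k : Fin d) (a : ZMod L) {i j : Fin d → ZMod L}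
    (h : torusAdj d L i j) : torusAdj d L (torusReflection k a i) (torusReflection k a j) := by
  obtain ⟨l, hl⟩ := h
  refine ⟨l, ?_⟩
  unfold torusReflection
  obtain rfl | hlk := eq_or_ne l k
  · rcases hl with rfl | rfl
    · right
      simp only [update_self, update_idem]
      congr 1; ring
    · left
      simp only [update_self, update_idem]
      congr 1; ring
  · rcases hl with rfl | rfl
    · left
      rw [update_of_ne hlk, update_of_ne hlk.symm, update_comm hlk]
    · right
      rw [update_of_ne hlk, update_of_ne hlk.symm, update_comm hlk]

lemma val_neg_add_val [NeZero L] {v : ZMod L} (hv : v ≠ 0) : (-v).val + v.val = L := by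
  rw [ZMod.neg_val, if_neg hv]
  exact Nat.sub_add_cancel v.val_lt.le

lemma two_mul_val_neg_lt [NeZero L] {v : ZMod L} (hv : L < 2 * v.val) :
    0 < (-v).val ∧ 2 * (-v).val < L := by
  have hv₀ : v ≠ 0 := by rintro rfl; simp at hv
  have := val_neg_add_val hv₀
  have := v.val_lt
  omega

lemma two_mul_val_add_one_le (hL : Even L) {v : ZMod L} (hv : 2 * v.val < L) :
    2 * (v + 1).val ≤ L := by
  obtain ⟨m, rfl⟩ := hL
  have : NeZero (m + m) := ⟨by omega⟩
  rw [← ZMod.natCast_zmod_val v, ← Nat.cast_add_one, ZMod.val_natCast_of_lt (by omega)]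
  omega

lemma two_mul_val_sub_one_le [NeZero L] {v : ZMod L} (hv₀ : 0 < v.val) (hv : 2 * v.val < L) :
    2 * (v - 1).val ≤ L := by
  rw [← ZMod.natCast_zmod_val v, ← Nat.cast_pred hv₀, ZMod.val_natCast_of_lt (by omega)]
  omega

lemma isTorusReflection_torusReflection [NeZero L] (hL : Even L) (k : Fin d) (a : ZMod L) :
    IsTorusReflection (torusReflection k a) (closedHalf k a) where
  involutive := torusReflection_involutive k a
  torusAdj_apply _ _ := torusAdj_torusReflection k a
  mem_or_apply_mem x := by
    simp only [closedHalf, Set.mem_ofPred_eq, sub_torusReflection_apply]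
    refine or_iff_not_imp_left.2 fun hx => (two_mul_val_neg_lt (not_le.1 hx)).2.le
  apply_eq_self x h₁ h₂ := by
    simp only [closedHalf, Set.mem_ofPred_eq, sub_torusReflection_apply] at h₁ h₂
    have hneg : -(a - x k) = a - x k := by
      by_cases hv : a - x k = 0
      · rw [hv, neg_zero]
      · have := val_neg_add_val hv
        exact ZMod.val_injective _ (by omega)
    rw [torusReflection, show 2 * a - x k = x k by linear_combination -hneg, update_eq_self]
  apply_mem_of_torusAdj i j hij hi := by
    obtain ⟨hpos, hlt⟩ := two_mul_val_neg_lt (not_le.1 hi)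
    change 2 * (a - torusReflection k a j k).val ≤ L
    rw [sub_torusReflection_apply]
    obtain ⟨l, hl⟩ := hij
    obtain rfl | hlk := eq_or_ne l k
    · rcases hl with rfl | rfl <;> rw [update_self]
      · convert two_mul_val_add_one_le hL hlt using 3; ring
      · convert two_mul_val_sub_one_le hpos hlt using 3; ring
    · rcases hl with rfl | rfl <;> rw [update_of_ne hlk.symm] <;> exact hlt.le

/-- The box with corner `i`, spacing `2` and `2 ^ n k` sites in direction `k`. Reflecting it in a
hyperplane at distance `1` from a face doubles it, so such boxes grow from the single site `i`. -/
def dyadicBox (i : Fin d → ZMod L) (n : Fin d → ℕ) : Set (Fin d → ZMod L) :=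
  {x | ∀ k, ∃ t < 2 ^ n k, x k = i k + 2 * (t : ℕ)}

lemma dyadicBox_zero (i : Fin d → ZMod L) : dyadicBox i 0 = {i} := by
  ext x
  simp [dyadicBox, funext_iff]

lemma dyadicBox_subset_closedHalf (i : Fin d → ZMod L) (n : Fin d → ℕ) {k : Fin d}
    (hn : 2 * 2 ^ (n k + 1) ≤ L) :
    dyadicBox i n ⊆ closedHalf k (i k + (2 ^ (n k + 1) - 1 : ℕ)) := by
  intro x hx
  obtain ⟨t, ht, hxt⟩ := hx k
  have : 2 ^ (n k + 1) = 2 * 2 ^ n k := pow_succ' 2 (n k)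
  have val_eq : i k + ((2 ^ (n k + 1) - 1 : ℕ) : ZMod L) - x k =
      ((2 ^ (n k + 1) - 1 - 2 * t : ℕ) : ZMod L) := by
    rw [Nat.cast_sub (show 2 * t ≤ _ by omega), hxt]; push_cast; ring
  change 2 * (_ - x k).val ≤ L
  rw [val_eq, ZMod.val_natCast_of_lt (by omega)]
  omega

lemma mem_dyadicBox_or_torusReflection_mem {i x : Fin d → ZMod L} {n : Fin d → ℕ} {k : Fin d}
    (hx : x ∈ dyadicBox i (n + Pi.single k 1)) :
    x ∈ dyadicBox i n ∨
      torusReflection k (i k + ((2 ^ (n k + 1) - 1 : ℕ) : ZMod L)) x ∈ dyadicBox i n := by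
  have other_coord (l : Fin d) (hl : l ≠ k) : ∃ t < 2 ^ n l, x l = i l + 2 * (t : ℕ) := by
    simpa [hl] using hx l
  obtain ⟨t, ht, hxt⟩ : ∃ t < 2 ^ (n k + 1), x k = i k + 2 * (t : ℕ) := by simpa using hx k
  have hpow : 2 ^ (n k + 1) = 2 * 2 ^ n k := pow_succ' 2 (n k)
  by_cases htn : t < 2 ^ n k
  · left
    intro l
    obtain rfl | hl := eq_or_ne l k
    exacts [⟨t, htn, hxt⟩, other_coord l hl]
  · right
    intro l
    unfold torusReflection
    obtain rfl | hl := eq_or_ne l k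
    · refine ⟨2 ^ (n l + 1) - 1 - t, by omega, ?_⟩
      rw [update_self, Nat.cast_sub (show t ≤ _ by omega), hxt]
      ring
    · rw [update_of_ne hl]
      exact other_coord l hl

lemma pow_two_pow_sum_le {ι R : Type*} [Fintype ι] [DecidableEq ι] [CommMonoid R] [Preorder R]
    [MulLeftMono R] {r : (ι → ℕ) → R} {K : ℕ}
    (step : ∀ n k, n k < K → r n ^ 2 ≤ r (n + Pi.single k 1)) {n : ι → ℕ} (hn : ∀ k, n k ≤ K) :
    r 0 ^ 2 ^ (∑ k, n k) ≤ r n := by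
  induction hN : ∑ k, n k generalizing n with
  | zero =>
    obtain rfl : n = 0 := funext fun k => Finset.sum_eq_zero_iff.1 hN k (Finset.mem_univ k)
    simp
  | succ N ih =>
    obtain ⟨k, -, hk⟩ := Finset.exists_ne_zero_of_sum_ne_zero (hN.trans_ne N.succ_ne_zero)
    obtain ⟨m, rfl⟩ : ∃ m, n = m + Pi.single k 1 := by
      refine ⟨n - Pi.single k 1, (tsub_add_cancel_of_le fun l => ?_).symm⟩
      obtain rfl | hl := eq_or_ne l k
      · simpa using Nat.one_le_iff_ne_zero.2 hk
      · simp [hl]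
    have hm : ∑ l, m l = N := by simpa [Finset.sum_add_distrib] using hN
    have hmK : m k < K := by simpa using hn k
    calc r 0 ^ 2 ^ (N + 1) = (r 0 ^ 2 ^ N) ^ 2 := by rw [← pow_mul, pow_succ]
      _ ≤ r m ^ 2 :=
        pow_le_pow_left' (ih (fun l => (Nat.le_add_right _ _).trans (hn l)) hm) 2
      _ ≤ r (m + Pi.single k 1) := step m k hmK

lemma muPer_pow_le [NeZero L] (hL : Even L) (hV : Measurable V) (i : Fin d → ZMod L) {K : ℕ}
    (hK : 2 * 2 ^ K ≤ L) :
    muPer d L lam η V {φ | M < φ i} ^ 2 ^ (d * K) ≤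
      muPer d L lam η V {φ | ∀ x ∈ dyadicBox i fun _ => K, M < φ x} := by
  have doubling (n : Fin d → ℕ) (k : Fin d) (hk : n k < K) :
      muPer d L lam η V {φ | ∀ x ∈ dyadicBox i n, M < φ x} ^ 2 ≤
        muPer d L lam η V {φ | ∀ x ∈ dyadicBox i (n + Pi.single k 1), M < φ x} := by
    have hn : 2 * 2 ^ (n k + 1) ≤ L := hK.trans' (by gcongr <;> omega)
    exact (isTorusReflection_torusReflection hL k _).sq_muPer_forall_lt_le hV
      (dyadicBox_subset_closedHalf i n hn) fun _ => mem_dyadicBox_or_torusReflection_mem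
  have iterated := pow_two_pow_sum_le
    (r := fun n => muPer d L lam η V {φ | ∀ x ∈ dyadicBox i n, M < φ x}) doubling
    (n := fun _ => K) fun _ => le_rfl
  simpa [dyadicBox_zero] using iterated

lemma exists_finset_subset_dyadicBox [NeZero L] (i : Fin d → ZMod L) {K : ℕ} (hK : 2 * 2 ^ K ≤ L) :
    ∃ A : Finset (Fin d → ZMod L), A.card = 2 ^ (d * K) ∧ ↑A ⊆ dyadicBox i fun _ => K := by
  let site (t : Fin d → Fin (2 ^ K)) : Fin d → ZMod L := fun k => i k + 2 * (t k : ℕ)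
  have site_injective : Injective site := by
    intro s t hst
    funext k
    have cast_eq : ((2 * (s k : ℕ) : ℕ) : ZMod L) = (2 * (t k : ℕ) : ℕ) := by
      push_cast; exact add_left_cancel (congrFun hst k)
    have val_eq := congrArg ZMod.val cast_eq
    have hs := (s k).isLt
    have ht := (t k).isLt
    rw [ZMod.val_natCast_of_lt (by omega), ZMod.val_natCast_of_lt (by omega)] at val_eq
    exact Fin.ext (by omega)
  refine ⟨Finset.univ.image site, ?_, ?_⟩
  · rw [Finset.card_image_of_injective _ site_injective, Finset.card_univ]
    simp [← pow_mul, mul_comm]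
  · rintro _ hx
    obtain ⟨t, -, rfl⟩ := Finset.mem_image.1 (Finset.mem_coe.1 hx)
    exact fun k => ⟨t k, (t k).isLt, rfl⟩

end Chessboard

section Comparison

variable {d L : ℕ} {lam η M : ℝ} {V : ℝ → ℝ}

/-- The Boltzmann weight of a single height above the hard wall. -/
noncomputable def siteWeight (lam : ℝ) (V : ℝ → ℝ) : ℝ → ℝ :=
  (Set.Ici 0).indicator fun x => Real.exp (-(lam * V x))

/-- The unnormalized Gibbs measure of a single isolated height. -/
noncomputable def siteGibbs (lam η : ℝ) (V : ℝ → ℝ) : Measure ℝ :=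
  (sitePrior η).withDensity fun x => ENNReal.ofReal (siteWeight lam V x)

instance : SigmaFinite (siteGibbs lam η V) :=
  SigmaFinite.withDensity_ofReal _

lemma siteWeight_nonneg (x : ℝ) : 0 ≤ siteWeight lam V x :=
  Set.indicator_nonneg (fun _ _ => (Real.exp_pos _).le) x

lemma measurable_siteWeight (hV : Measurable V) : Measurable (siteWeight lam V) :=
  (hV.const_mul lam).neg.exp.indicator measurableSet_Ici

lemma card_torus [NeZero L] : Fintype.card (Fin d → ZMod L) = L ^ d := by
  simp

lemma densPer_le_prod_siteWeight [NeZero L] (φ : (Fin d → ZMod L) → ℝ) :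
    densPer d L lam V φ ≤ ∏ i, siteWeight lam V (φ i) := by
  by_cases hφ : ∀ i, 0 ≤ φ i
  · have weight_eq (i : Fin d → ZMod L) : siteWeight lam V (φ i) = Real.exp (-(lam * V (φ i))) :=
      Set.indicator_of_mem (hφ i) _
    simp only [weight_eq]
    rw [densPer, if_pos hφ, ← Real.exp_sum, Real.exp_le_exp, Finset.sum_neg_distrib,
      neg_le_neg_iff, HamPer, ← Finset.mul_sum]
    exact le_add_of_nonneg_left (by positivity)
  · rw [densPer, if_neg hφ]
    exact Finset.prod_nonneg fun i _ => siteWeight_nonneg _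

lemma gibbsPer_le_pi_siteGibbs [NeZero L] (hV : Measurable V) :
    gibbsPer d L lam η V ≤ Measure.pi fun _ => siteGibbs lam η V := by
  have : ∀ _ : Fin d → ZMod L, SigmaFinite ((sitePrior η).withDensity fun x =>
      ENNReal.ofReal (siteWeight lam V x)) := fun _ => SigmaFinite.withDensity_ofReal _
  unfold siteGibbs
  rw [pi_withDensity fun _ => (measurable_siteWeight hV).ennreal_ofReal]
  refine withDensity_mono (Eventually.of_forall fun φ => ?_)
  change _ ≤ ∏ i, ENNReal.ofReal (siteWeight lam V (φ i))
  rw [← ENNReal.ofReal_prod_of_nonneg fun i _ => siteWeight_nonneg _]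
  exact ENNReal.ofReal_le_ofReal (densPer_le_prod_siteWeight φ)

lemma isFiniteMeasure_gibbsPer [NeZero L] (hV : Measurable V)
    [IsFiniteMeasure (siteGibbs lam η V)] : IsFiniteMeasure (gibbsPer d L lam η V) :=
  isFiniteMeasure_of_le _ (gibbsPer_le_pi_siteGibbs hV)

lemma gibbsPer_forall_lt_le [NeZero L] (hV : Measurable V) (A : Finset (Fin d → ZMod L)) :
    gibbsPer d L lam η V {φ | ∀ x ∈ A, M < φ x} ≤
      siteGibbs lam η V (Set.Ioi M) ^ A.card * max 1 (siteGibbs lam η V Set.univ) ^ L ^ d := by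
  set T := siteGibbs lam η V (Set.Ioi M)
  set B := max 1 (siteGibbs lam η V Set.univ)
  have event_eq : {φ : (Fin d → ZMod L) → ℝ | ∀ x ∈ A, M < φ x} =
      Set.univ.pi fun x => if x ∈ A then Set.Ioi M else Set.univ := by
    ext φ
    refine forall_congr' fun x => ?_
    by_cases hx : x ∈ A <;> simp [hx]
  calc gibbsPer d L lam η V {φ | ∀ x ∈ A, M < φ x}
      ≤ ∏ x, siteGibbs lam η V (if x ∈ A then Set.Ioi M else Set.univ) := by
        rw [event_eq, ← Measure.pi_pi]
        exact gibbsPer_le_pi_siteGibbs hV _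
    _ ≤ ∏ x : Fin d → ZMod L, (if x ∈ A then T else 1) * B := by
        refine Finset.prod_le_prod' fun x _ => ?_
        split_ifs
        · exact le_mul_of_one_le_right' (le_max_left _ _)
        · rw [one_mul]; exact le_max_right _ _
    _ = T ^ A.card * B ^ L ^ d := by
        rw [Finset.prod_mul_distrib, Finset.prod_const, Finset.card_univ, card_torus,
          Finset.prod_ite_mem, Finset.univ_inter, Finset.prod_const]

lemma card_torusAdj_le [NeZero L] (i : Fin d → ZMod L) :
    Finset.card {j | torusAdj d L i j} ≤ 2 * d := by
  let up := Finset.univ.image fun k => update i k (i k + 1)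
  let down := Finset.univ.image fun k => update i k (i k - 1)
  have neighbours : ({j | torusAdj d L i j} : Finset (Fin d → ZMod L)) ⊆ up ∪ down := by
    intro j hj
    obtain ⟨k, rfl | rfl⟩ := (Finset.mem_filter.1 hj).2 <;> simp [up, down]
  calc Finset.card {j | torusAdj d L i j}
      ≤ up.card + down.card := (Finset.card_le_card neighbours).trans (Finset.card_union_le _ _)
    _ ≤ d + d := add_le_add (Finset.card_image_le.trans_eq (by simp))
        (Finset.card_image_le.trans_eq (by simp))
    _ = 2 * d := (two_mul d).symm

lemma HamPer_le_of_mem_Icc [NeZero L] (hlam : 0 ≤ lam) (hV : MonotoneOn V (Set.Ici 0))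
    {φ : (Fin d → ZMod L) → ℝ} (hφ : ∀ i, φ i ∈ Set.Icc 0 1) :
    HamPer d L lam V φ ≤ L ^ d * (1 / 4 + lam * V 1) := by
  have card_univ : (Finset.univ : Finset (Fin d → ZMod L)).card = L ^ d := by
    rw [Finset.card_univ, card_torus]
  have grad_le : ∑ i, ∑ j, (if torusAdj d L i j then (φ i - φ j) ^ 2 else 0) ≤
      (L : ℝ) ^ d * (2 * d) := by
    have site_le (i : Fin d → ZMod L) :
        ∑ j, (if torusAdj d L i j then (φ i - φ j) ^ 2 else 0) ≤ 2 * (d : ℝ) := calc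
      _ ≤ ∑ j, (if torusAdj d L i j then (1 : ℝ) else 0) := by
          gcongr with j
          split_ifs
          · rw [sq_le_one_iff_abs_le_one, abs_le]
            constructor <;> linarith [(hφ i).1, (hφ i).2, (hφ j).1, (hφ j).2]
          · rfl
      _ ≤ 2 * d := by rw [Finset.sum_boole]; exact_mod_cast card_torusAdj_le i
    simpa [card_univ] using Finset.sum_le_card_nsmul Finset.univ _ _ fun i _ => site_le i
  have pot_le : ∑ i, V (φ i) ≤ (L : ℝ) ^ d * V 1 := by
    simpa [card_univ] using Finset.sum_le_card_nsmul Finset.univ (fun i => V (φ i)) (V 1)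
      fun i _ => hV (hφ i).1 (Set.mem_Ici.2 zero_le_one) (hφ i).2
  have grad_const : (1 / (8 * d) : ℝ) * (L ^ d * (2 * d)) ≤ L ^ d * (1 / 4) := by
    rcases eq_or_ne (d : ℝ) 0 with hd | hd
    · rw [hd]; simp
    · field_simp; linarith
  calc HamPer d L lam V φ ≤ 1 / (8 * d) * (L ^ d * (2 * d)) + lam * (L ^ d * V 1) := by
        unfold HamPer; gcongr
    _ ≤ L ^ d * (1 / 4) + lam * (L ^ d * V 1) := by gcongr
    _ = L ^ d * (1 / 4 + lam * V 1) := by ring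

lemma inv_gibbsPer_univ_le [NeZero L] (hlam : 0 ≤ lam) (hV : MonotoneOn V (Set.Ici 0)) :
    (gibbsPer d L lam η V Set.univ)⁻¹ ≤
      ENNReal.ofReal (Real.exp (1 / 4 + lam * V 1)) ^ L ^ d := by
  set cube : Set ((Fin d → ZMod L) → ℝ) := Set.univ.pi fun _ => Set.Icc 0 1
  have measurable_cube : MeasurableSet cube := .univ_pi fun _ => measurableSet_Icc
  have one_le_prior : 1 ≤ priorPer d L η cube := by
    change 1 ≤ Measure.pi (fun _ => sitePrior η) cube
    rw [Measure.pi_pi]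
    exact Finset.one_le_prod' fun i _ => by simp [sitePrior]
  have le_dens (φ) (hφ : φ ∈ cube) :
      Real.exp (-(L ^ d * (1 / 4 + lam * V 1))) ≤ densPer d L lam V φ := by
    rw [densPer, if_pos fun i => (hφ i trivial).1]
    exact Real.exp_le_exp.2 <| neg_le_neg <| HamPer_le_of_mem_Icc hlam hV fun i => hφ i trivial
  rw [ENNReal.inv_le_iff_inv_le]
  calc (ENNReal.ofReal (Real.exp (1 / 4 + lam * V 1)) ^ L ^ d)⁻¹
      = ENNReal.ofReal (Real.exp (-(L ^ d * (1 / 4 + lam * V 1)))) := by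
        rw [← ENNReal.ofReal_pow (Real.exp_pos _).le, ← Real.exp_nat_mul,
          ← ENNReal.ofReal_inv_of_pos (Real.exp_pos _), ← Real.exp_neg]
        push_cast; rfl
    _ ≤ ENNReal.ofReal (Real.exp (-(L ^ d * (1 / 4 + lam * V 1)))) * priorPer d L η cube :=
        le_mul_of_one_le_right' one_le_prior
    _ ≤ ∫⁻ φ in cube, ENNReal.ofReal (densPer d L lam V φ) ∂priorPer d L η := by
        rw [← setLIntegral_const]
        exact setLIntegral_mono' measurable_cube fun φ hφ => ENNReal.ofReal_le_ofReal (le_dens φ hφ)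
    _ = gibbsPer d L lam η V cube := (withDensity_apply _ measurable_cube).symm
    _ ≤ gibbsPer d L lam η V Set.univ := measure_mono (Set.subset_univ _)

lemma exists_two_pow_le_lt (hL : Even L) (hL₀ : L ≠ 0) :
    ∃ K, 2 * 2 ^ K ≤ L ∧ L < 4 * 2 ^ K := by
  obtain ⟨m, rfl⟩ := hL
  have hm : m ≠ 0 := by omega
  have hle := Nat.pow_log_le_self 2 hm
  have hlt := Nat.lt_pow_succ_log_self one_lt_two m
  exact ⟨Nat.log 2 m, by omega, by omega⟩

lemma muPer_lt_le [NeZero L] (hL : Even L) (hlam : 0 ≤ lam) (hVm : Measurable V)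
    (hV : MonotoneOn V (Set.Ici 0)) (i : Fin d → ZMod L) :
    muPer d L lam η V {φ | M < φ i} ≤
      (ENNReal.ofReal (Real.exp (1 / 4 + lam * |V 1|)) *
        max 1 (siteGibbs lam η V Set.univ)) ^ 4 ^ d * siteGibbs lam η V (Set.Ioi M) := by
  set T := siteGibbs lam η V (Set.Ioi M)
  set B := max 1 (siteGibbs lam η V Set.univ)
  set b := ENNReal.ofReal (Real.exp (1 / 4 + lam * |V 1|))
  obtain ⟨K, hKL, hLK⟩ := exists_two_pow_le_lt hL (NeZero.ne L)
  obtain ⟨A, hA, hAbox⟩ := exists_finset_subset_dyadicBox i hKL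
  have one_le : 1 ≤ b * B :=
    one_le_mul (ENNReal.one_le_ofReal.2 (Real.one_le_exp (by positivity))) (le_max_left _ _)
  have le_b : ENNReal.ofReal (Real.exp (1 / 4 + lam * V 1)) ≤ b :=
    ENNReal.ofReal_le_ofReal (by gcongr; exact le_abs_self _)
  have volume_le : L ^ d ≤ 4 ^ d * 2 ^ (d * K) := by
    calc L ^ d ≤ (4 * 2 ^ K) ^ d := Nat.pow_le_pow_left hLK.le d
      _ = 4 ^ d * 2 ^ (d * K) := by rw [mul_pow, ← pow_mul, mul_comm K]
  refine (ENNReal.pow_le_pow_left_iff (n := 2 ^ (d * K)) (by positivity)).1 ?_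
  calc muPer d L lam η V {φ | M < φ i} ^ 2 ^ (d * K)
      ≤ muPer d L lam η V {φ | ∀ x ∈ A, M < φ x} := (muPer_pow_le hL hVm i hKL).trans
        (measure_mono fun φ hφ x hx => hφ x (hAbox hx))
    _ ≤ b ^ L ^ d * (T ^ A.card * B ^ L ^ d) := by
        simp only [muPer, Measure.smul_apply, smul_eq_mul]
        exact mul_le_mul' ((inv_gibbsPer_univ_le hlam hV).trans (by gcongr))
          (gibbsPer_forall_lt_le hVm A)
    _ = (b * B) ^ L ^ d * T ^ 2 ^ (d * K) := by rw [hA, mul_pow]; ring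
    _ ≤ (b * B) ^ (4 ^ d * 2 ^ (d * K)) * T ^ 2 ^ (d * K) := by gcongr
    _ = ((b * B) ^ 4 ^ d * T) ^ 2 ^ (d * K) := by rw [pow_mul, ← mul_pow]

end Comparison

section Potential

variable {lam η s y : ℝ} {V : ℝ → ℝ}

lemma le_of_Vinv_lt (hV : MonotoneOn V (Set.Ici 0)) (hy : ∃ x, 0 ≤ x ∧ y ≤ V x) {x : ℝ}
    (hx : Vinv V y < x) : y ≤ V x := by
  obtain ⟨z, ⟨hz₀, hyz⟩, hzx⟩ := exists_lt_of_csInf_lt hy hx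
  exact hyz.trans (hV hz₀ (hz₀.trans hzx.le) hzx.le)

lemma exists_le_of_integrableOn_exp (hlam : 0 ≤ lam)
    (hint : IntegrableOn (fun x => Real.exp (-(lam * V x))) (Set.Ici 0)) (y : ℝ) :
    ∃ x, 0 ≤ x ∧ y ≤ V x := by
  by_contra! hVy
  have const_integrable : IntegrableOn (fun _ : ℝ => Real.exp (-(lam * y))) (Set.Ici 0) := by
    refine hint.mono' aestronglyMeasurable_const ?_
    refine (ae_restrict_iff' measurableSet_Ici).2 (.of_forall fun x hx => ?_)
    rw [Real.norm_eq_abs, Real.abs_exp]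
    gcongr
    exact (hVy x hx).le
  simp [integrableOn_const_iff] at const_integrable

lemma isFiniteMeasure_siteGibbs
    (hint : IntegrableOn (fun x => Real.exp (-(lam * V x))) (Set.Ici 0)) :
    IsFiniteMeasure (siteGibbs lam η V) := by
  have weight_integrable : Integrable (siteWeight lam V) (sitePrior η) :=
    ((integrable_indicator_iff measurableSet_Ici).2 hint).add_measure
      ((integrable_dirac (by simp)).smul_measure ENNReal.ofReal_ne_top)
  exact isFiniteMeasure_withDensity_ofReal weight_integrable.2

lemma siteGibbs_le_exp_mul (hV : Measurable V) (hs : 0 ≤ s) {S : Set ℝ} (hS : MeasurableSet S)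
    (hSV : ∀ x ∈ S, y ≤ V x) :
    siteGibbs lam η V S ≤ ENNReal.ofReal (Real.exp (-(s * y))) * siteGibbs (lam - s) η V S := by
  have weight_le (x : ℝ) (hx : x ∈ S) :
      siteWeight lam V x ≤ Real.exp (-(s * y)) * siteWeight (lam - s) V x := by
    by_cases hx₀ : x ∈ Set.Ici 0
    · rw [siteWeight, siteWeight, Set.indicator_of_mem hx₀, Set.indicator_of_mem hx₀,
        ← Real.exp_add, Real.exp_le_exp]
      linarith [mul_le_mul_of_nonneg_left (hSV x hx) hs]
    · simp [siteWeight, Set.indicator_of_notMem hx₀]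
  rw [siteGibbs, siteGibbs, withDensity_apply _ hS, withDensity_apply _ hS,
    ← lintegral_const_mul _ (measurable_siteWeight hV).ennreal_ofReal]
  refine setLIntegral_mono' hS fun x hx => ?_
  rw [← ENNReal.ofReal_mul (Real.exp_pos _).le]
  exact ENNReal.ofReal_le_ofReal (weight_le x hx)

lemma measurable_of_convexOn (hconv : ConvexOn ℝ Set.univ V) : Measurable V :=
  (continuousOn_univ.1 (hconv.continuousOn isOpen_univ)).measurable

lemma monotoneOn_of_even_of_convexOn (heven : V.Even) (hconv : ConvexOn ℝ Set.univ V) :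
    MonotoneOn V (Set.Ici 0) := by
  intro x hx y _ hxy
  have mem_Icc : x ∈ Set.Icc (-y) y := ⟨by linarith [Set.mem_Ici.1 hx], hxy⟩
  simpa [heven y] using hconv.le_max_of_mem_Icc (Set.mem_univ _) (Set.mem_univ _) mem_Icc

lemma add_slope_mul_sub_le (hmono : MonotoneOn V (Set.Ici 0)) (hconv : ConvexOn ℝ (Set.Ici 0) V)
    {z x : ℝ} (hz : 0 < z) (hx : 0 ≤ x) : V 0 + slope V 0 z * (x - z) ≤ V x := by
  have hV0 {t : ℝ} (ht : 0 ≤ t) : V 0 ≤ V t := hmono Set.self_mem_Ici ht ht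
  have slope_nonneg : 0 ≤ slope V 0 z := by
    rw [slope_def_field]; exact div_nonneg (sub_nonneg.2 (hV0 hz.le)) (by linarith)
  rcases le_or_gt x z with hxz | hzx
  · linarith [hV0 hx, mul_nonneg slope_nonneg (sub_nonneg.2 hxz)]
  · have slope_le := hconv.slope_mono_adjacent Set.self_mem_Ici (hz.trans hzx).le hz hzx
    rw [← slope_def_field, le_div_iff₀ (sub_pos.2 hzx)] at slope_le
    linarith [hV0 hz.le]

lemma integrableOn_exp_neg_of_convexOn (hmono : MonotoneOn V (Set.Ici 0))
    (hconv : ConvexOn ℝ (Set.Ici 0) V) {z : ℝ} (hz : 0 < z) (hVz : V 0 < V z) (hlam : 0 < lam) :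
    IntegrableOn (fun x => Real.exp (-(lam * V x))) (Set.Ici 0) := by
  have slope_pos : 0 < slope V 0 z := by
    rw [slope_def_field]; exact div_pos (sub_pos.2 hVz) (by linarith)
  have dominating : IntegrableOn (fun x => Real.exp (-(lam * (V 0 - slope V 0 z * z))) *
      Real.exp (-(lam * slope V 0 z) * x)) (Set.Ici 0) :=
    ((integrableOn_Ici_iff_integrableOn_Ioi (by finiteness)).2
      (exp_neg_integrableOn_Ioi 0 (by positivity))).const_mul _
  have exp_antitone : AntitoneOn (fun x => Real.exp (-(lam * V x))) (Set.Ici 0) :=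
    fun x hx y hy hxy => by
      have := hmono hx hy hxy
      dsimp only
      gcongr
  refine dominating.mono' ?_ ((ae_restrict_iff' measurableSet_Ici).2 (.of_forall fun x hx => ?_))
  · exact (aemeasurable_restrict_of_antitoneOn measurableSet_Ici exp_antitone).aestronglyMeasurable
  · rw [Real.norm_eq_abs, Real.abs_exp, ← Real.exp_add, Real.exp_le_exp]
    linarith [mul_le_mul_of_nonneg_left (add_slope_mul_sub_le hmono hconv hz hx) hlam.le]

lemma integrableOn_exp_neg_of_even_of_convexOn (heven : V.Even) (hconv : ConvexOn ℝ Set.univ V)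
    (hne : V ≠ 0) (h0 : V 0 = 0) (hlam : 0 < lam) :
    IntegrableOn (fun x => Real.exp (-(lam * V x))) (Set.Ici 0) := by
  have hmono := monotoneOn_of_even_of_convexOn heven hconv
  obtain ⟨z, hz⟩ := Function.ne_iff.1 hne
  have V_abs : V |z| = V z := by rcases abs_choice z with h | h <;> simp [h, heven z]
  have abs_pos : 0 < |z| := abs_pos.2 fun h => hz (by rw [h, h0]; rfl)
  refine integrableOn_exp_neg_of_convexOn hmono (hconv.subset (Set.subset_univ _) (convex_Ici 0))
    abs_pos ?_ hlam
  refine (hmono Set.self_mem_Ici abs_pos.le abs_pos.le).lt_of_ne ?_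
  rw [h0, V_abs]
  exact Ne.symm hz

end Potential

section Truncation

variable {d : ℕ} {lam η : ℝ} {V : ℝ → ℝ}

lemma muPer_exists_lt_le {L : ℕ} [NeZero L] {p : ℝ≥0∞} {M : ℝ}
    (hp : ∀ i, muPer d L lam η V {φ | M < φ i} ≤ p) :
    muPer d L lam η V {φ | ∃ i, M < φ i} ≤ L ^ d * p := by
  calc muPer d L lam η V {φ | ∃ i, M < φ i}
      ≤ ∑ i, muPer d L lam η V {φ | M < φ i} := by
        rw [Set.ofPred_exists]; exact measure_iUnion_fintype_le _ _
    _ ≤ ∑ _i : Fin d → ZMod L, p := Finset.sum_le_sum fun i _ => hp i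
    _ = L ^ d * p := by simp

lemma exists_muPer_Vinv_lt_le (hVm : Measurable V) (hVmono : MonotoneOn V (Set.Ici 0))
    (hVint : ∀ c > 0, IntegrableOn (fun x => Real.exp (-(c * V x))) (Set.Ici 0)) (hlam : 0 < lam)
    {κ δ : ℝ} (hδ : 0 ≤ δ) (hκ : d + δ < κ) :
    ∃ D : ℝ≥0∞, D ≠ ⊤ ∧ ∀ (L : ℕ) [NeZero L], Even L →
      muPer d L lam η V {φ | ∃ i, Vinv V (κ / lam * Real.log L) < φ i} ≤
        D * ENNReal.ofReal ((L : ℝ) ^ (-δ)) := by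
  have hκ₀ : 0 < κ := by linarith [d.cast_nonneg (α := ℝ)]
  set s := lam * ((d + δ) / κ) with hs
  have hs₀ : 0 ≤ s := by positivity
  have hslam : 0 < lam - s := by
    rw [sub_pos]; exact mul_lt_of_lt_one_right hlam ((div_lt_one hκ₀).2 hκ)
  have := isFiniteMeasure_siteGibbs (η := η) (hVint lam hlam)
  have := isFiniteMeasure_siteGibbs (η := η) (hVint _ hslam)
  set C := (ENNReal.ofReal (Real.exp (1 / 4 + lam * |V 1|)) *
    max 1 (siteGibbs lam η V Set.univ)) ^ 4 ^ d
  refine ⟨C * siteGibbs (lam - s) η V Set.univ, by finiteness, fun L _ hL => ?_⟩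
  set y := κ / lam * Real.log L with hy
  have tail_le : siteGibbs lam η V (Set.Ioi (Vinv V y)) ≤
      ENNReal.ofReal (Real.exp (-(s * y))) * siteGibbs (lam - s) η V Set.univ :=
    (siteGibbs_le_exp_mul hVm hs₀ measurableSet_Ioi fun x hx => le_of_Vinv_lt hVmono
      (exists_le_of_integrableOn_exp hlam.le (hVint lam hlam) y) hx).trans
      (by gcongr; exact Set.subset_univ _)
  have volume_mul_exp : (L : ℝ≥0∞) ^ d * ENNReal.ofReal (Real.exp (-(s * y))) =
      ENNReal.ofReal ((L : ℝ) ^ (-δ)) := by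
    have hL₀ : (0 : ℝ) < L := Nat.cast_pos.2 (NeZero.pos L)
    have hsy : -(s * y) = Real.log L * (-(d + δ)) := by rw [hs, hy]; field_simp
    rw [hsy, ← Real.rpow_def_of_pos hL₀, ← ENNReal.ofReal_natCast, ← ENNReal.ofReal_pow hL₀.le,
      ← ENNReal.ofReal_mul (by positivity), ← Real.rpow_natCast, ← Real.rpow_add hL₀]
    ring_nf
  calc muPer d L lam η V {φ | ∃ i, Vinv V y < φ i}
      ≤ L ^ d * (C * (ENNReal.ofReal (Real.exp (-(s * y))) * siteGibbs (lam - s) η V Set.univ)) :=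
        muPer_exists_lt_le fun i => (muPer_lt_le hL hlam.le hVm hVmono i).trans (by gcongr)
    _ = C * siteGibbs (lam - s) η V Set.univ *
          (L ^ d * ENNReal.ofReal (Real.exp (-(s * y)))) := by ring
    _ = C * siteGibbs (lam - s) η V Set.univ * ENNReal.ofReal ((L : ℝ) ^ (-δ)) := by
        rw [volume_mul_exp]

lemma mul_ZplusPer_le_ZplusPerIn {L : ℕ} [NeZero L] [IsFiniteMeasure (gibbsPer d L lam η V)]
    {G : Set ((Fin d → ZMod L) → ℝ)} (hG : MeasurableSet G) {c : ℝ} (hc : c ≤ 1)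
    (hGc : muPer d L lam η V Gᶜ ≤ ENNReal.ofReal (1 - c)) :
    c * ZplusPer d L lam η V ≤ ZplusPerIn d L lam η V G := by
  rcases eq_or_ne (gibbsPer d L lam η V Set.univ) 0 with hZ | hZ
  · simp [ZplusPer, ZplusPerIn, hZ]
  rw [muPer, Measure.smul_apply, smul_eq_mul,
    ENNReal.inv_mul_le_iff hZ (measure_ne_top _ _)] at hGc
  have compl_le := ENNReal.toReal_mono (by finiteness) hGc
  rw [ENNReal.toReal_mul, ENNReal.toReal_ofReal (sub_nonneg.2 hc)] at compl_le
  have compl_eq := measureReal_compl (μ := gibbsPer d L lam η V) hG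
  unfold Measure.real at compl_eq
  unfold ZplusPer ZplusPerIn
  linarith

end Truncation

theorem ZplusPer_truncated_comparable_general (d : ℕ) {V : ℝ → ℝ} (hVm : Measurable V)
    (hVmono : MonotoneOn V (Set.Ici 0))
    (hVint : ∀ c > 0, IntegrableOn (fun x => Real.exp (-(c * V x))) (Set.Ici 0))
    {lam : ℝ} (hlam : 0 < lam) (η : NNReal) {κ : ℝ} (hκ : d < κ) {c : ℝ} (hc : c < 1) :
    ∃ L₀ : ℕ, ∀ (L : ℕ) [NeZero L], L₀ ≤ L → Even L →
      c * ZplusPer d L lam η V ≤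
        ZplusPerIn d L lam η V {φ | ∀ i, φ i ≤ Vinv V (κ / lam * Real.log L)} ∧
      ZplusPerIn d L lam η V {φ | ∀ i, φ i ≤ Vinv V (κ / lam * Real.log L)} ≤
        ZplusPer d L lam η V := by
  have hδ : 0 < (κ - d) / 2 := by linarith
  obtain ⟨D, hD, bad_le⟩ := exists_muPer_Vinv_lt_le (η := η) hVm hVmono hVint hlam hδ.le
    (show d + (κ - d) / 2 < κ by linarith)
  have bound_tendsto : Tendsto (fun L : ℕ => D * ENNReal.ofReal ((L : ℝ) ^ (-((κ - d) / 2)))) atTop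
      (nhds 0) := by
    simpa using ENNReal.Tendsto.const_mul (ENNReal.tendsto_ofReal
      ((tendsto_rpow_neg_atTop hδ).comp tendsto_natCast_atTop_atTop)) (.inr hD)
  obtain ⟨L₀, hL₀⟩ := eventually_atTop.1 <| bound_tendsto.eventually_le_const
    (ENNReal.ofReal_pos.2 (sub_pos.2 hc))
  have := isFiniteMeasure_siteGibbs (η := η) (hVint lam hlam)
  refine ⟨L₀, fun L _ hL hLeven => ?_⟩
  have := isFiniteMeasure_gibbsPer (d := d) (L := L) (lam := lam) (η := η) hVm
  have measurable_good : MeasurableSet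
      {φ : (Fin d → ZMod L) → ℝ | ∀ i, φ i ≤ Vinv V (κ / lam * Real.log L)} := by
    rw [Set.ofPred_forall]
    exact .iInter fun i => measurableSet_le (measurable_pi_apply i) measurable_const
  refine ⟨mul_ZplusPer_le_ZplusPerIn measurable_good hc.le ?_,
    measureReal_mono (Set.subset_univ _)⟩
  simpa [Set.compl_ofPred] using (bad_le L hLeven).trans (hL₀ L hL)

/-- **Equation (4).** For `d ≥ 2`, `λ > 0`, `η ≥ 0` and all sufficiently large even `L`,
`(1/2) Z^{+,per}_{L;λ,η} ≤ Z^{+,per}_{L;λ,η}[φ_i ≤ V^{-1}((2d/λ) log L) ∀i] ≤ Z^{+,per}_{L;λ,η}`. -/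
theorem ZplusPer_truncated_comparable
    (d : ℕ) (hd : 2 ≤ d)
    (V : ℝ → ℝ) (hVeven : ∀ x, V (-x) = V x) (hVconvex : ConvexOn ℝ Set.univ V)
    (hVne : V ≠ 0) (hV0 : V 0 = 0)
    (lam : ℝ) (hlam : 0 < lam) (η : ℝ) (hη : 0 ≤ η) :
    ∃ L₀ : ℕ, ∀ L : ℕ, ∀ hL : 0 < L, L₀ ≤ L → Even L →
      (1 / 2) * @ZplusPer d L ⟨hL.ne'⟩ lam η V ≤
        @ZplusPerIn d L ⟨hL.ne'⟩ lam η V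
          {φ | ∀ i, φ i ≤ Vinv V (2 * d / lam * Real.log L)} ∧
      @ZplusPerIn d L ⟨hL.ne'⟩ lam η V
          {φ | ∀ i, φ i ≤ Vinv V (2 * d / lam * Real.log L)} ≤
        @ZplusPer d L ⟨hL.ne'⟩ lam η V := by
  lift η to NNReal using hη
  obtain ⟨L₀, h⟩ := ZplusPer_truncated_comparable_general d (measurable_of_convexOn hVconvex)
    (monotoneOn_of_even_of_convexOn hVeven hVconvex)
    (fun c => integrableOn_exp_neg_of_even_of_convexOn hVeven hVconvex hVne hV0) hlam η
    (κ := 2 * d) (by norm_cast; omega) one_half_lt_one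
  exact ⟨L₀, fun L hL => @h L ⟨hL.ne'⟩⟩
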